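/- arXiv:2206.11402 — 6 statements merged into one kernel-verified Lean document; each statement's English description precedes it below -/
import Mathlib

section
/- For every n ≥ 1, every observed sequence z ∈ {0,1}^n, and every index i ∈ {1,…,n}, the likelihood ratio satisfies Pr[Z = z | X_i = 0] / Pr[Z = z | X_i = 1] ≤ a²/(c·d), where Δ = √((1−q)²(1−ρ0)² − 2(1−q−r−q·r)(1−ρ0)ρ1 + (1−r)²ρ1²), a = (1−q)(1−ρ0) − (1−r)ρ1 + Δ, c = 2rρ1, and d = 2r(1−ρ0). -/
/-!
Write `p = 1 - e0`, `W = p / e1`, `B = a / d` and `s = W * B = a / c`. The number `B` is the larger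
root of a quadratic saying that `B` is the fixed point of the Möbius map
`b ↦ (W b (1-q) + q) / (W b r + 1 - r)`, and this map is increasing because `q + r < 1`.
Moreover `1 ≤ B`.

Splitting the hidden path at `i`, the likelihood `Pr[Z = z | X_i = v]` is the product of a factor
coming from times `≥ i` and one coming from times `< i`. The ratio (`v = 0` over `v = 1`) of each
factor is obtained by iterating the Möbius map above with `W` replaced by an emission ratio
(at most `W`); for the past this uses that a two-state chain is reversible with respect to `π`.
By induction the first ratio, which includes the emission at `i`, stays at most `s`
(`hmmSum_one_zero_bound`), the second at most `B` (the induction in `hmmSum_bound`), and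
`s * B = a² / (c d)`.

The path sums are handled by peeling off the first hidden state (`hmmSum_succ_succ`), which
turns an initial weight `u` into the pushed-forward weight `pushInit`.
-/

open Finset
open scoped Classical

noncomputable section

/-- Transition matrix of the binary Markov chain: `P(0,0)=1-q, P(0,1)=q, P(1,0)=r, P(1,1)=1-r`. -/
def mcT (q r : ℝ) : Bool → Bool → ℝ
  | false, false => 1 - q
  | false, true => q
  | true, false => r
  | true, true => 1 - r

/-- Emission (noise) matrix: `B(0,0)=1-e0, B(0,1)=e0, B(1,0)=e1, B(1,1)=1-e1`. -/
def mcE (e0 e1 : ℝ) : Bool → Bool → ℝ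
  | false, false => 1 - e0
  | false, true => e0
  | true, false => e1
  | true, true => 1 - e1

/-- Stationary initial distribution `π = (r/(q+r), q/(q+r))`. -/
def mcInit (q r : ℝ) : Bool → ℝ
  | false => r / (q + r)
  | true => q / (q + r)

/-- `Pr[X = x] = π(x_1) ∏_{t=1}^{n-1} P(x_t, x_{t+1})` for the hidden chain. -/
def priorX (q r : ℝ) (n : ℕ) (x : Fin n → Bool) : ℝ :=
  (if h : 0 < n then mcInit q r (x ⟨0, h⟩) else 1) *
  ∏ t : Fin (n - 1),
    mcT q r (x ⟨t.1, by have := t.isLt; omega⟩) (x ⟨t.1 + 1, by have := t.isLt; omega⟩)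

/-- Probability of a joint event `E` on the hidden sequence `X` and observed sequence `Z`,
under the joint law `Pr[X = x, Z = z] = priorX x · ∏_t B(x_t, z_t)`. -/
def eventPr (q r e0 e1 : ℝ) (n : ℕ)
    (E : (Fin n → Bool) → (Fin n → Bool) → Prop) : ℝ :=
  ∑ x : Fin n → Bool, ∑ z : Fin n → Bool,
    if E x z then priorX q r n x * ∏ t, mcE e0 e1 (x t) (z t) else 0

/-- Conditional probability `Pr[E | F]` under the joint HMM law. -/
def condPr (q r e0 e1 : ℝ) (n : ℕ)
    (E F : (Fin n → Bool) → (Fin n → Bool) → Prop) : ℝ :=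
  eventPr q r e0 e1 n (fun x z => E x z ∧ F x z) / eventPr q r e0 e1 n F

/-- `Pr[Z = z | X_i = v]`. -/
def likGivenXi (q r e0 e1 : ℝ) (n : ℕ) (i : Fin n) (v : Bool) (z : Fin n → Bool) : ℝ :=
  condPr q r e0 e1 n (fun _ z' => z' = z) (fun x _ => x i = v)

/-- Forward quantities: `α_0(x) = 1`,
`α_{t+1}(x) = B(x, z_{t+1}) (α_t(0) P(x,0) + α_t(1) P(x,1))` (1-based `z` index `t+1`
is the 0-based index `t`). -/
def fwd (q r e0 e1 : ℝ) (n : ℕ) (z : Fin n → Bool) : ℕ → Bool → ℝ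
  | 0, _ => 1
  | t + 1, x =>
    if h : t < n then
      mcE e0 e1 x (z ⟨t, h⟩) *
        (fwd q r e0 e1 n z t false * mcT q r x false +
         fwd q r e0 e1 n z t true * mcT q r x true)
    else 1

/-- Backward quantities: `β_n(x) = 1`,
`β_t(x) = β_{t+1}(0) B(0, z_{t+1}) P(x,0) + β_{t+1}(1) B(1, z_{t+1}) P(x,1)`. -/
def bwd (q r e0 e1 : ℝ) (n : ℕ) (z : Fin n → Bool) (t : ℕ) (x : Bool) : ℝ :=
  if h : t < n then
    bwd q r e0 e1 n z (t + 1) false * mcE e0 e1 false (z ⟨t, h⟩) * mcT q r x false +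
    bwd q r e0 e1 n z (t + 1) true * mcE e0 e1 true (z ⟨t, h⟩) * mcT q r x true
  else 1
  termination_by n - t

/-- Sum over hidden paths of length `n + 1` with `x i = v` of the path weight, for an arbitrary
(unnormalised) initial weight `u` and arbitrary site weights `g t` in place of the emission
probabilities. -/
def hmmSum (q r : ℝ) (n : ℕ) (g : Fin (n + 1) → Bool → ℝ) (u : Bool → ℝ) (i : Fin (n + 1))
    (v : Bool) : ℝ :=
  ∑ x : Fin (n + 1) → Bool, if x i = v then
    u (x 0) * (∏ t : Fin n, mcT q r (x t.castSucc) (x t.succ)) * ∏ t, g t (x t) else 0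

/-- The weight on the second hidden state obtained by summing out the first one, with initial
weight `u` and site weight `g`. -/
def pushInit (q r : ℝ) (g u : Bool → ℝ) (y : Bool) : ℝ :=
  u false * g false * mcT q r false y + u true * g true * mcT q r true y

lemma sum_path_cons (n : ℕ) (f : (Fin (n + 1) → Bool) → ℝ) :
    ∑ x, f x = ∑ x : Fin n → Bool, (f (Fin.cons false x) + f (Fin.cons true x)) := by
  rw [← (Fin.consEquiv (fun _ : Fin (n + 1) => Bool)).sum_comp, Fintype.sum_prod_type,
    Fintype.sum_bool, Finset.sum_add_distrib, add_comm]
  rfl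

lemma hmmSum_succ_succ (q r : ℝ) (n : ℕ) (g : Fin (n + 2) → Bool → ℝ) (u : Bool → ℝ)
    (j : Fin (n + 1)) (v : Bool) :
    hmmSum q r (n + 1) g u j.succ v =
      hmmSum q r n (fun t => g t.succ) (pushInit q r (g 0) u) j v := by
  unfold hmmSum
  rw [sum_path_cons]
  refine Finset.sum_congr rfl fun x _ => ?_
  simp only [Fin.cons_succ, Fin.cons_zero, Fin.prod_univ_succ, Fin.castSucc_zero,
    ← Fin.succ_castSucc, pushInit]
  split_ifs
  · ring
  · simp

lemma hmmSum_zero_index (q r : ℝ) (n : ℕ) (g : Fin (n + 1) → Bool → ℝ) (u : Bool → ℝ) (v : Bool) :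
    hmmSum q r n g u 0 v = u v * hmmSum q r n g (fun _ => 1) 0 v := by
  unfold hmmSum
  rw [Finset.mul_sum]
  refine Finset.sum_congr rfl fun x _ => ?_
  split_ifs with h
  · rw [h]; ring
  · simp

/-- The backward recursion. -/
lemma hmmSum_succ_zero (q r : ℝ) (n : ℕ) (g : Fin (n + 2) → Bool → ℝ) (v : Bool) :
    hmmSum q r (n + 1) g (fun _ => 1) 0 v =
      g 0 v * (mcT q r v false * hmmSum q r n (fun t => g t.succ) (fun _ => 1) 0 false
        + mcT q r v true * hmmSum q r n (fun t => g t.succ) (fun _ => 1) 0 true) := by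
  unfold hmmSum
  rw [sum_path_cons, Finset.mul_sum, Finset.mul_sum, ← Finset.sum_add_distrib, Finset.mul_sum]
  refine Finset.sum_congr rfl fun x _ => ?_
  simp only [Fin.cons_succ, Fin.cons_zero, Fin.prod_univ_succ, Fin.castSucc_zero,
    ← Fin.succ_castSucc]
  cases v <;> cases h : x 0 <;> simp <;> ring

lemma hmmSum_base (q r : ℝ) (g : Fin 1 → Bool → ℝ) (v : Bool) :
    hmmSum q r 0 g (fun _ => 1) 0 v = g 0 v := by
  unfold hmmSum
  rw [sum_path_cons]
  cases v <;> simp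

/-- With trivial site weights the stationary law `π` is reproduced at every time. -/
lemma hmmSum_stationary (q r : ℝ) (hqr : 0 < q + r) (n : ℕ) (i : Fin (n + 1)) (v : Bool) :
    hmmSum q r n (fun _ _ => 1) (mcInit q r) i v = mcInit q r v := by
  have hone : ∀ (n : ℕ) (v : Bool), hmmSum q r n (fun _ _ => 1) (fun _ => 1) 0 v = 1 := by
    intro n
    induction n with
    | zero => intro v; exact hmmSum_base q r _ v
    | succ n ih => intro v; rw [hmmSum_succ_zero, ih, ih]; cases v <;> simp [mcT]
  induction n with
  | zero => rw [Fin.fin_one_eq_zero i, hmmSum_zero_index, hone, mul_one]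
  | succ n ih =>
    induction i using Fin.cases with
    | zero => rw [hmmSum_zero_index, hone, mul_one]
    | succ j =>
      have hpush : pushInit q r (fun _ => 1) (mcInit q r) = mcInit q r := by
        funext y
        cases y <;> simp only [pushInit, mcInit, mcT] <;> field_simp <;> ring
      rw [hmmSum_succ_succ, hpush, ih]

lemma mcT_pos {q r : ℝ} (hq0 : 0 < q) (hq1 : q < 1/2) (hr0 : 0 < r) (hr1 : r < 1/2)
    (x y : Bool) : 0 < mcT q r x y := by
  cases x <;> cases y <;> simp only [mcT] <;> linarith

lemma mcE_pos {e0 e1 : ℝ} (he00 : 0 < e0) (he01 : e0 < 1/2) (he10 : 0 < e1) (he11 : e1 < 1/2)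
    (x y : Bool) : 0 < mcE e0 e1 x y := by
  cases x <;> cases y <;> simp only [mcE] <;> linarith

lemma hmmSum_pos {q r : ℝ} (hT : ∀ x y, 0 < mcT q r x y) (n : ℕ) (g : Fin (n + 1) → Bool → ℝ)
    (hg : ∀ t y, 0 < g t y) (u : Bool → ℝ) (hu : ∀ y, 0 < u y) (i : Fin (n + 1)) (v : Bool) :
    0 < hmmSum q r n g u i v := by
  have hw : ∀ x : Fin (n + 1) → Bool,
      0 < u (x 0) * (∏ t : Fin n, mcT q r (x t.castSucc) (x t.succ)) * ∏ t, g t (x t) :=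
    fun x => mul_pos (mul_pos (hu _) (Finset.prod_pos fun t _ => hT _ _))
      (Finset.prod_pos fun t _ => hg _ _)
  unfold hmmSum
  refine Finset.sum_pos' (fun x _ => ?_) ⟨fun _ => v, Finset.mem_univ _, ?_⟩
  · split_ifs
    · exact (hw x).le
    · exact le_rfl
  · rw [if_pos rfl]
    exact hw fun _ => v

/-- One step of the Möbius map in homogeneous form: a ratio `m / k` at most `s` is sent to a ratio
at most `B`, where `hfix` says that `s` itself is sent to `B`. -/
lemma mobius_step {q r s B m k : ℝ} (hq1 : q < 1/2) (hr1 : r < 1/2)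
    (hs : 0 < s) (hB : 1 ≤ B) (hfix : s * (1 - q) + q = B * (s * r + (1 - r))) (hmk : m ≤ s * k) :
    (1 - q) * m + q * k ≤ B * (r * m + (1 - r) * k) := by
  have hcoef : 0 ≤ 1 - q - B * r := by
    have h : s * (1 - q - B * r) = B * (1 - r) - q := by linarith
    have h2 : 0 ≤ s * (1 - q - B * r) := by rw [h]; nlinarith
    exact nonneg_of_mul_nonneg_right h2 hs
  have h3 := mul_le_mul_of_nonneg_left hmk hcoef
  have h4 : k * (s * (1 - q) + q) = k * (B * (s * r + (1 - r))) := by rw [hfix]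
  linarith

/-- The contribution of the present and the future has ratio at most `s = W * B`. -/
lemma hmmSum_one_zero_bound {q r W B : ℝ} (hq0 : 0 < q) (hq1 : q < 1/2) (hr0 : 0 < r)
    (hr1 : r < 1/2) (hW : 0 < W) (hB : 1 ≤ B)
    (hfix : W * B * (1 - q) + q = B * (W * B * r + (1 - r)))
    (n : ℕ) (g : Fin (n + 1) → Bool → ℝ)
    (hg : ∀ t y, 0 < g t y) (hgW : ∀ t, g t false ≤ W * g t true) :
    hmmSum q r n g (fun _ => 1) 0 false ≤ W * B * hmmSum q r n g (fun _ => 1) 0 true := by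
  induction n with
  | zero =>
    rw [hmmSum_base, hmmSum_base]
    have h := mul_pos hW (hg 0 true)
    nlinarith [hgW 0]
  | succ n ih =>
    rw [hmmSum_succ_zero, hmmSum_succ_zero]
    have hT := mcT_pos hq0 hq1 hr0 hr1
    have hφ := hmmSum_pos hT n (fun t => g t.succ) (fun t y => hg _ _)
      (fun _ => 1) (fun _ => one_pos) 0
    have ih' := ih (fun t => g t.succ) (fun t y => hg _ _) (fun t => hgW _)
    have hstep := mobius_step hq1 hr1 (by positivity) hB hfix ih'
    have h0 := hφ false
    have h1 := hφ true
    simp only [mcT]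
    generalize hmmSum q r n (fun t => g t.succ) (fun _ => 1) 0 false = m at *
    generalize hmmSum q r n (fun t => g t.succ) (fun _ => 1) 0 true = k at *
    have hpos : 0 ≤ (1 - q) * m + q * k := by
      have : 0 < (1 - q) * m := mul_pos (by linarith) h0
      positivity
    calc g 0 false * ((1 - q) * m + q * k)
        ≤ (W * g 0 true) * (B * (r * m + (1 - r) * k)) :=
          mul_le_mul (hgW 0) hstep hpos (mul_pos hW (hg 0 true)).le
      _ = _ := by ring

lemma hmmSum_zero_bound {q r W B : ℝ} (hq0 : 0 < q) (hq1 : q < 1/2) (hr0 : 0 < r)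
    (hr1 : r < 1/2) (hW : 0 < W) (hB : 1 ≤ B)
    (hfix : W * B * (1 - q) + q = B * (W * B * r + (1 - r)))
    (n : ℕ) (g : Fin (n + 1) → Bool → ℝ)
    (hg : ∀ t y, 0 < g t y) (hgW : ∀ t, g t false ≤ W * g t true)
    (u : Bool → ℝ) (hupos : ∀ y, 0 < u y) (hu : u false * q ≤ B * (u true * r)) :
    hmmSum q r n g u 0 false * q ≤ (W * B * B) * (hmmSum q r n g u 0 true * r) := by
  rw [hmmSum_zero_index, hmmSum_zero_index q r n g u true]
  have h := hmmSum_one_zero_bound hq0 hq1 hr0 hr1 hW hB hfix n g hg hgW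
  have h0 := hmmSum_pos (mcT_pos hq0 hq1 hr0 hr1) n g hg (fun _ => 1) (fun _ => one_pos) 0 false
  have hut := hupos true
  have := mul_le_mul hu h h0.le (by positivity)
  linarith

/-- The likelihood-ratio bound for path sums. The hypothesis `hu` says that the initial weight,
divided by `π ∝ (r, q)`, has ratio at most `B`; it is preserved by `pushInit`. -/
lemma hmmSum_bound {q r W B : ℝ} (hq0 : 0 < q) (hq1 : q < 1/2) (hr0 : 0 < r)
    (hr1 : r < 1/2) (hW : 0 < W) (hB : 1 ≤ B)
    (hfix : W * B * (1 - q) + q = B * (W * B * r + (1 - r)))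
    (n : ℕ) (g : Fin (n + 1) → Bool → ℝ)
    (hg : ∀ t y, 0 < g t y) (hgW : ∀ t, g t false ≤ W * g t true)
    (u : Bool → ℝ) (hupos : ∀ y, 0 < u y) (hu : u false * q ≤ B * (u true * r))
    (i : Fin (n + 1)) :
    hmmSum q r n g u i false * q ≤ (W * B * B) * (hmmSum q r n g u i true * r) := by
  have hT := mcT_pos hq0 hq1 hr0 hr1
  induction n generalizing u with
  | zero =>
    rw [Fin.fin_one_eq_zero i]
    exact hmmSum_zero_bound hq0 hq1 hr0 hr1 hW hB hfix 0 g hg hgW u hupos hu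
  | succ n ih =>
    induction i using Fin.cases with
    | zero => exact hmmSum_zero_bound hq0 hq1 hr0 hr1 hW hB hfix _ g hg hgW u hupos hu
    | succ j =>
      have hpp : ∀ y, 0 < pushInit q r (g 0) u y := fun y =>
        add_pos (mul_pos (mul_pos (hupos _) (hg _ _)) (hT _ _))
          (mul_pos (mul_pos (hupos _) (hg _ _)) (hT _ _))
      have hpb : pushInit q r (g 0) u false * q ≤ B * (pushInit q r (g 0) u true * r) := by
        have hut := hupos true
        have h1 : (u false * q) * g 0 false ≤ (B * (u true * r)) * (W * g 0 true) :=
          mul_le_mul hu (hgW 0) (hg _ _).le (by positivity)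
        -- Reversibility: in terms of the weights divided by `π`, the forward step is the same
        -- Möbius map as the backward one.
        have hstep := mobius_step (m := u false * q * g 0 false) (k := u true * r * g 0 true)
          hq1 hr1 (by positivity) hB hfix (by linarith)
        simp only [pushInit, mcT]
        linarith
      rw [hmmSum_succ_succ, hmmSum_succ_succ]
      exact ih _ (fun t y => hg _ _) (fun t => hgW _) _ hpp hpb j

lemma eventPr_joint (q r e0 e1 : ℝ) (n : ℕ) (i : Fin (n + 1)) (v : Bool) (z : Fin (n + 1) → Bool) :
    eventPr q r e0 e1 (n + 1) (fun x z' => z' = z ∧ x i = v) =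
      hmmSum q r n (fun t y => mcE e0 e1 y (z t)) (mcInit q r) i v := by
  unfold eventPr hmmSum
  refine Finset.sum_congr rfl fun x _ => ?_
  rw [Finset.sum_eq_single z]
  · simp only [true_and]
    rw [priorX, dif_pos (Nat.succ_pos n)]
    split_ifs <;> rfl
  · intro z' _ hz
    exact if_neg fun h => hz h.1
  · simp

lemma eventPr_state (q r e0 e1 : ℝ) (hqr : 0 < q + r) (n : ℕ) (i : Fin (n + 1)) (v : Bool) :
    eventPr q r e0 e1 (n + 1) (fun x _ => x i = v) = mcInit q r v := by
  rw [← hmmSum_stationary q r hqr n i v]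
  unfold eventPr hmmSum
  refine Finset.sum_congr rfl fun x _ => ?_
  split_ifs with h
  · have hE : ∑ z : Fin (n + 1) → Bool, ∏ t, mcE e0 e1 (x t) (z t) = 1 := by
      rw [← Fintype.prod_sum (fun t y => mcE e0 e1 (x t) y)]
      refine Finset.prod_eq_one fun t _ => ?_
      cases x t <;> simp [mcE]
    rw [← Finset.mul_sum, hE, priorX, dif_pos (Nat.succ_pos n), Finset.prod_const_one]
    rfl
  · simp

/-- `B = a / d` is at least `1` and is fixed by the Möbius map with emission ratio `p / e1`. -/
lemma fixed_point {q r p e1 Δ a d : ℝ} (hq1 : q < 1/2) (hr0 : 0 < r) (hr1 : r < 1/2)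
    (hp1 : 1/2 < p) (he10 : 0 < e1) (he11 : e1 < 1/2)
    (hΔ : Δ = Real.sqrt ((1-q)^2*p^2 - 2*(1-q-r-q*r)*p*e1 + (1-r)^2*e1^2))
    (ha : a = (1-q)*p - (1-r)*e1 + Δ) (hd : d = 2*r*p) :
    1 ≤ a / d ∧ p / e1 * (a / d) * (1 - q) + q = a / d * (p / e1 * (a / d) * r + (1 - r)) := by
  have hp0 : 0 < p := by linarith
  -- The difference of the two sides factors; it is the quadratic of `B` evaluated at `1`.
  have hDy : (2*r*p - ((1-q)*p - (1-r)*e1))^2 ≤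
      (1-q)^2*p^2 - 2*(1-q-r-q*r)*p*e1 + (1-r)^2*e1^2 := by
    have h1 : 0 ≤ 4 * (r * p * ((1-q-r) * (p - e1))) := by
      have : 0 ≤ 1-q-r := by linarith
      have : 0 ≤ p - e1 := by linarith
      positivity
    linarith
  have hΔ2 : Δ^2 = (1-q)^2*p^2 - 2*(1-q-r-q*r)*p*e1 + (1-r)^2*e1^2 := by
    rw [hΔ]; exact Real.sq_sqrt (le_trans (sq_nonneg _) hDy)
  have hda : d ≤ a := by
    have := Real.le_sqrt_of_sq_le hDy
    rw [← hΔ] at this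
    linarith
  have hd0 : 0 < d := by rw [hd]; positivity
  have hquad : a^2 = 2*((1-q)*p - (1-r)*e1)*a + 4*q*r*p*e1 := by
    have : Δ = a - ((1-q)*p - (1-r)*e1) := by linarith
    rw [this] at hΔ2
    linarith
  refine ⟨by rw [le_div_iff₀ hd0]; linarith, ?_⟩
  rw [hd]
  field_simp
  linarith

/-- Theorem 1 (main bound): for every `n ≥ 1`, observed sequence `z` and index `i`,
`Pr[Z = z | X_i = 0] / Pr[Z = z | X_i = 1] ≤ a² / (c d)`. -/
theorem stmt0 (q r e0 e1 : ℝ)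
    (hq0 : 0 < q) (hq1 : q < 1/2) (hr0 : 0 < r) (hr1 : r < 1/2)
    (he00 : 0 < e0) (he01 : e0 < 1/2) (he10 : 0 < e1) (he11 : e1 < 1/2)
    (n : ℕ) (hn : 1 ≤ n) (z : Fin n → Bool) (i : Fin n)
    (Δ a c d : ℝ)
    (hΔ : Δ = Real.sqrt ((1-q)^2*(1-e0)^2 - 2*(1-q-r-q*r)*(1-e0)*e1 + (1-r)^2*e1^2))
    (ha : a = (1-q)*(1-e0) - (1-r)*e1 + Δ)
    (hc : c = 2*r*e1) (hd : d = 2*r*(1-e0)) :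
    likGivenXi q r e0 e1 n i false z / likGivenXi q r e0 e1 n i true z ≤ a^2 / (c*d) := by
  obtain ⟨n, rfl⟩ : ∃ m, n = m + 1 := ⟨n - 1, by omega⟩
  have hp0 : 0 < 1 - e0 := by linarith
  have hqr : 0 < q + r := by linarith
  obtain ⟨hB, hfix⟩ := fixed_point hq1 hr0 hr1 (by linarith) he10 he11 hΔ ha hd
  have hW : 0 < (1 - e0) / e1 := by positivity
  have hπ : ∀ y, 0 < mcInit q r y := by
    intro y; cases y <;> simp only [mcInit] <;> positivity
  have hE := mcE_pos he00 he01 he10 he11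
  have hgW : ∀ t, mcE e0 e1 false (z t) ≤ (1 - e0) / e1 * mcE e0 e1 true (z t) := by
    intro t
    rw [div_mul_eq_mul_div, le_div_iff₀ he10]
    cases z t <;> simp only [mcE]
    · linarith
    · nlinarith
  have hmain := hmmSum_bound hq0 hq1 hr0 hr1 hW hB hfix n
    (fun t y => mcE e0 e1 y (z t)) (fun t y => hE _ _) hgW (mcInit q r) hπ
    (by
      have h : mcInit q r false * q = mcInit q r true * r := by simp only [mcInit]; ring
      have := mul_pos (hπ true) hr0
      rw [h]; nlinarith) i
  have hpos := hmmSum_pos (mcT_pos hq0 hq1 hr0 hr1) n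
    (fun t y => mcE e0 e1 y (z t)) (fun t y => hE _ _) (mcInit q r) hπ i true
  have hK : a^2 / (c*d) = (1 - e0) / e1 * (a / d) * (a / d) := by
    rw [hc, hd]; field_simp
  unfold likGivenXi condPr
  rw [eventPr_joint, eventPr_joint, eventPr_state _ _ _ _ hqr, eventPr_state _ _ _ _ hqr, hK]
  rw [div_le_iff₀ (div_pos hpos (hπ true))]
  simp only [mcInit] at hmain hpos ⊢
  rw [div_div_eq_mul_div, div_div_eq_mul_div, mul_div_assoc', div_le_div_iff₀ hr0 hq0]
  have := mul_le_mul_of_nonneg_right hmain hqr.le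
  linarith

end
end

section
/- For every t ∈ {0,…,n} and every z ∈ {0,1}^n, the forward ratio is maximized by the all-zero sequence: α_t(0; z)/α_t(1; z) ≤ α_t(0; 0^n)/α_t(1; 0^n), where 0^n denotes the all-zero sequence. (All quantities α_t(x; z) are strictly positive.) -/
/-!
The ratio `α_t(0;z)/α_t(1;z)` evolves by a Möbius map followed by multiplication by the
likelihood ratio `B(0,z_{t+1})/B(1,z_{t+1})`. The Möbius map is increasing because
`det P = 1 - q - r > 0`, and the likelihood ratio is largest for the symbol `0` because
`e0 + e1 < 1`. Hence the all-zero sequence maximizes the ratio by induction on `t`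
(`fwd_cross_le`, in cross-multiplied form).
-/

open Finset
open scoped Classical

noncomputable section

lemma fwd_pos {q r e0 e1 : ℝ}
    (hq0 : 0 < q) (hq1 : q < 1/2) (hr0 : 0 < r) (hr1 : r < 1/2)
    (he00 : 0 < e0) (he01 : e0 < 1/2) (he10 : 0 < e1) (he11 : e1 < 1/2)
    (n : ℕ) (z : Fin n → Bool) (t : ℕ) (x : Bool) : 0 < fwd q r e0 e1 n z t x := by
  induction t generalizing x with
  | zero => simp [fwd]
  | succ t ih =>
    rw [fwd]
    split_ifs with h
    · have hT := mcT_pos hq0 hq1 hr0 hr1 x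
      exact mul_pos (mcE_pos he00 he01 he10 he11 _ _)
        (add_pos (mul_pos (ih _) (hT _)) (mul_pos (ih _) (hT _)))
    · exact one_pos

/-- The likelihood ratio `B(0,y)/B(1,y)` is largest at `y = 0`, in cross-multiplied form. -/
lemma mcE_cross_le {e0 e1 : ℝ} (he01 : e0 < 1/2) (he11 : e1 < 1/2) (y : Bool) :
    mcE e0 e1 false y * mcE e0 e1 true false ≤ mcE e0 e1 false false * mcE e0 e1 true y := by
  cases y <;> simp only [mcE] <;> linarith

/-- Monotonicity of the Möbius map induced by `P`: the difference of the two sides is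
`det P = 1 - q - r` times that of the hypothesis. -/
lemma mcT_cross_le {q r a0 a1 b0 b1 : ℝ} (hq1 : q < 1/2) (hr1 : r < 1/2)
    (h : a0 * b1 ≤ b0 * a1) :
    (a0 * mcT q r false false + a1 * mcT q r false true) *
        (b0 * mcT q r true false + b1 * mcT q r true true) ≤
      (b0 * mcT q r false false + b1 * mcT q r false true) *
        (a0 * mcT q r true false + a1 * mcT q r true true) := by
  simp only [mcT]
  have hdet : 0 ≤ (1 - q - r) * (b0 * a1 - a0 * b1) :=
    mul_nonneg (by linarith) (by linarith)
  linarith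

/-- The comparison of forward ratios in cross-multiplied form. For `t > n` every `fwd` value is
the default `1`, and both sides agree. -/
lemma fwd_cross_le {q r e0 e1 : ℝ}
    (hq0 : 0 < q) (hq1 : q < 1/2) (hr0 : 0 < r) (hr1 : r < 1/2)
    (he00 : 0 < e0) (he01 : e0 < 1/2) (he10 : 0 < e1) (he11 : e1 < 1/2)
    (n : ℕ) (z : Fin n → Bool) (t : ℕ) :
    fwd q r e0 e1 n z t false * fwd q r e0 e1 n (fun _ => false) t true ≤
      fwd q r e0 e1 n (fun _ => false) t false * fwd q r e0 e1 n z t true := by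
  induction t with
  | zero => simp [fwd]
  | succ t ih =>
    simp only [fwd]
    split_ifs with h
    · have hE := mcE_pos he00 he01 he10 he11
      have hT := mcT_pos hq0 hq1 hr0 hr1
      have hF := fwd_pos hq0 hq1 hr0 hr1 he00 he01 he10 he11 n
      have hA : ∀ w x, 0 < fwd q r e0 e1 n w t false * mcT q r x false +
          fwd q r e0 e1 n w t true * mcT q r x true := fun w x =>
        add_pos (mul_pos (hF _ _ _) (hT _ _)) (mul_pos (hF _ _ _) (hT _ _))
      have key := mul_le_mul (mcE_cross_le he01 he11 (z ⟨t, h⟩)) (mcT_cross_le hq1 hr1 ih)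
        (mul_pos (hA _ _) (hA _ _)).le (mul_pos (hE _ _) (hE _ _)).le
      rw [mul_mul_mul_comm, mul_mul_mul_comm (mcE e0 e1 false false)]
      exact key
    · exact le_rfl

/-- The forward ratio `α_t(0;z)/α_t(1;z)` is maximized by the all-zero sequence. -/
theorem stmt3 (q r e0 e1 : ℝ)
    (hq0 : 0 < q) (hq1 : q < 1/2) (hr0 : 0 < r) (hr1 : r < 1/2)
    (he00 : 0 < e0) (he01 : e0 < 1/2) (he10 : 0 < e1) (he11 : e1 < 1/2)
    (n : ℕ) (hn : 1 ≤ n) (t : ℕ) (ht : t ≤ n) (z : Fin n → Bool) :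
    fwd q r e0 e1 n z t false / fwd q r e0 e1 n z t true
      ≤ fwd q r e0 e1 n (fun _ => false) t false /
        fwd q r e0 e1 n (fun _ => false) t true := by
  have hF := fwd_pos hq0 hq1 hr0 hr1 he00 he01 he10 he11 n
  rw [div_le_div_iff₀ (hF _ _ _) (hF _ _ _)]
  exact fwd_cross_le hq0 hq1 hr0 hr1 he00 he01 he10 he11 n z t

end
end

section
/- Let 0^n denote the all-zero sequence in {0,1}^n. For every t ∈ {0,…,n}: α_t(0; 0^n)/α_t(1; 0^n) ≤ a/c and β_t(0; 0^n)/β_t(1; 0^n) ≤ a/d, where Δ = √((1−q)²(1−ρ0)² − 2(1−q−r−q·r)(1−ρ0)ρ1 + (1−r)²ρ1²), a = (1−q)(1−ρ0) − (1−r)ρ1 + Δ, c = 2rρ1, and d = 2r(1−ρ0). -/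
/-!
On the all-zero sequence one step of the forward recursion acts on the ratio
`x = α_t(0)/α_t(1)` by the Möbius map `x ↦ u((1-q)x + q) / (v(r x + 1 - r))`, where `u = 1 - e0`
and `v = e1`; the backward recursion acts similarly on `β_t(0)/β_t(1)`. Both maps are
nondecreasing, because `q + r ≤ 1`, and their positive fixed points are `a/c` and `a/d`, because
`a` is the positive root of `a² = 2(u(1-q) - v(1-r))a + 4qruv`. The recursions start from the
ratio `1`, which lies below both fixed points since `v ≤ u`, so the ratios never exceed them.

`root_facts` collects the properties of `a`; the two inductions carry the bounds in the
division-free forms `α_t(0) c ≤ a α_t(1)` and `β_t(0) d ≤ a β_t(1)`.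
-/

open Finset
open scoped Classical

noncomputable section

/-- Properties of the positive root `a`: an upper bound (monotonicity of the Möbius maps), the
quadratic equation (the fixed-point property), and the two lower bounds saying that the initial
ratio `1` is below both fixed points. -/
lemma root_facts (q r u v Δ a : ℝ) (hq0 : 0 < q) (hq1 : q < 1/2) (hr0 : 0 < r) (hr1 : r < 1/2)
    (hv : 0 < v) (huv : v < u)
    (hΔ : Δ = Real.sqrt ((1-q)^2*u^2 - 2*(1-q-r-q*r)*u*v + (1-r)^2*v^2))
    (ha : a = (1-q)*u - (1-r)*v + Δ) :
    a ≤ 2*u*(1-q) ∧ (2*u*(1-q) - a) * a = 2*v*((1-r)*a - 2*r*u*q) ∧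
      2*r*v ≤ a ∧ 2*r*u ≤ a := by
  have hu : 0 < u := hv.trans huv
  have hD : (1-q)^2*u^2 - 2*(1-q-r-q*r)*u*v + (1-r)^2*v^2
      = ((1-q)*u - (1-r)*v)^2 + 4*(q*r*(u*v)) := by ring
  rw [hD] at hΔ
  have hpos : 0 < q*r*(u*v) := by positivity
  have hsq : Δ^2 = ((1-q)*u - (1-r)*v)^2 + 4*(q*r*(u*v)) := by
    rw [hΔ]; exact Real.sq_sqrt (by positivity)
  have hΔ0 : 0 ≤ Δ := hΔ ▸ Real.sqrt_nonneg _
  -- `Δ² = (u(1-q) + v(1-r))² - 4uv(1-q-r)`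
  have h1 : Δ ≤ (1-q)*u + (1-r)*v := by
    apply le_of_abs_le
    apply abs_le_of_sq_le_sq _ (add_nonneg (mul_nonneg (by linarith) hu.le)
      (mul_nonneg (by linarith) hv.le))
    have : 0 ≤ u*v*(1-q-r) := mul_nonneg (by positivity) (by linarith)
    nlinarith
  have h2 : 2*r*u - ((1-q)*u - (1-r)*v) ≤ Δ := by
    apply le_of_abs_le
    apply abs_le_of_sq_le_sq _ hΔ0
    have : 0 ≤ r*u*((u-v)*(1-q-r)) :=
      mul_nonneg (by positivity) (mul_nonneg (by linarith) (by linarith))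
    nlinarith
  refine ⟨by linarith, ?_, ?_, by linarith⟩
  · subst ha
    linear_combination -hsq
  · have : r*v ≤ r*u := by gcongr
    linarith

/-- One step of the forward recursion preserves `x c ≤ a y`. -/
lemma fwd_step {q r u v a x y : ℝ} (hk : a ≤ 2*u*(1-q))
    (hka : (2*u*(1-q) - a) * a = 2*v*((1-r)*a - 2*r*u*q)) (h : x*(2*r*v) ≤ a*y) :
    u*(x*(1-q) + y*q) * (2*r*v) ≤ a*(v*(x*r + y*(1-r))) := by
  have := mul_le_mul_of_nonneg_left h (sub_nonneg.2 hk)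
  linear_combination (1/2) * this + (1/2) * y * hka

/-- One step of the backward recursion preserves `x d ≤ a y`. -/
lemma bwd_step {q r u v a x y : ℝ} (hk : a ≤ 2*u*(1-q))
    (hka : (2*u*(1-q) - a) * a = 2*v*((1-r)*a - 2*r*u*q)) (h : x*(2*r*u) ≤ a*y) :
    (x*u*(1-q) + y*v*q) * (2*r*u) ≤ a*(x*u*r + y*v*(1-r)) := by
  have := mul_le_mul_of_nonneg_left h (sub_nonneg.2 hk)
  linear_combination (1/2) * this + (1/2) * y * hka

/-- On the all-zero sequence, `α_t(0)/α_t(1) ≤ a/c` and `β_t(0)/β_t(1) ≤ a/d`. -/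
theorem stmt6 (q r e0 e1 : ℝ)
    (hq0 : 0 < q) (hq1 : q < 1/2) (hr0 : 0 < r) (hr1 : r < 1/2)
    (he00 : 0 < e0) (he01 : e0 < 1/2) (he10 : 0 < e1) (he11 : e1 < 1/2)
    (n : ℕ) (hn : 1 ≤ n) (t : ℕ) (ht : t ≤ n)
    (Δ a c d : ℝ)
    (hΔ : Δ = Real.sqrt ((1-q)^2*(1-e0)^2 - 2*(1-q-r-q*r)*(1-e0)*e1 + (1-r)^2*e1^2))
    (ha : a = (1-q)*(1-e0) - (1-r)*e1 + Δ)
    (hc : c = 2*r*e1) (hd : d = 2*r*(1-e0)) :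
    fwd q r e0 e1 n (fun _ => false) t false / fwd q r e0 e1 n (fun _ => false) t true ≤ a / c ∧
    bwd q r e0 e1 n (fun _ => false) t false / bwd q r e0 e1 n (fun _ => false) t true ≤ a / d := by
  have hu : 0 < 1 - e0 := by linarith
  obtain ⟨hk, hka, hva, hua⟩ :=
    root_facts q r (1-e0) e1 Δ a hq0 hq1 hr0 hr1 he10 (by linarith) hΔ ha
  have hq : 0 < 1 - q := by linarith
  have hr : 0 < 1 - r := by linarith
  subst hc hd
  constructor
  · have key : ∀ s ≤ n, 0 < fwd q r e0 e1 n (fun _ => false) s false ∧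
        0 < fwd q r e0 e1 n (fun _ => false) s true ∧
        fwd q r e0 e1 n (fun _ => false) s false * (2*r*e1)
          ≤ a * fwd q r e0 e1 n (fun _ => false) s true := by
      intro s
      induction s with
      | zero => intro _; simpa [fwd] using hva
      | succ s ih =>
        intro hs
        obtain ⟨h0, h1, h⟩ := ih (by omega)
        have hs' : s < n := by omega
        simp only [fwd, hs', dif_pos, mcE, mcT]
        exact ⟨by positivity, by positivity, fwd_step hk hka h⟩
    obtain ⟨-, h1, h⟩ := key t ht
    exact (div_le_div_iff₀ h1 (by positivity)).2 h
  · have key : ∀ m s, s + m = n → 0 < bwd q r e0 e1 n (fun _ => false) s false ∧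
        0 < bwd q r e0 e1 n (fun _ => false) s true ∧
        bwd q r e0 e1 n (fun _ => false) s false * (2*r*(1-e0))
          ≤ a * bwd q r e0 e1 n (fun _ => false) s true := by
      intro m
      induction m with
      | zero =>
        intro s hs
        have hs' : ¬ s < n := by omega
        have hb : ∀ x, bwd q r e0 e1 n (fun _ => false) s x = 1 := by
          intro x; rw [bwd, dif_neg hs']
        simpa [hb] using hua
      | succ m ih =>
        intro s hs
        obtain ⟨h0, h1, h⟩ := ih (s+1) (by omega)
        have hs' : s < n := by omega
        rw [bwd.eq_1 q r e0 e1 n _ s false, bwd.eq_1 q r e0 e1 n _ s true, dif_pos hs', dif_pos hs']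
        simp only [mcE, mcT]
        exact ⟨by positivity, by positivity, bwd_step hk hka h⟩
    obtain ⟨-, h1, h⟩ := key (n - t) t (by omega)
    exact (div_le_div_iff₀ h1 (by positivity)).2 h


end
end

section
/- Let 0^n denote the all-zero sequence in {0,1}^n. For every t ∈ {0,…,n}, the forward ratio has the closed form α_t(0; 0^n)/α_t(1; 0^n) = (a(c−b)λ1^t + b(a−c)λ2^t) / (c(c−b)λ1^t + c(a−c)λ2^t), where Δ = √((1−q)²(1−ρ0)² − 2(1−q−r−q·r)(1−ρ0)ρ1 + (1−r)²ρ1²), a = (1−q)(1−ρ0) − (1−r)ρ1 + Δ, b = (1−q)(1−ρ0) − (1−r)ρ1 − Δ, c = 2rρ1, λ1 = ((1−q)(1−ρ0) + (1−r)ρ1 + Δ)/2, and λ2 = ((1−q)(1−ρ0) + (1−r)ρ1 − Δ)/2. -/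
/-!
On the all-zero sequence the forward vector `(α_t(0), α_t(1))` is multiplied at each step by
`M = !![(1-q)(1-e0), q(1-e0); r e1, (1-r) e1]`. The numbers `l1, l2` are the eigenvalues of `M`, with
eigenvectors `(a, c)` and `(b, c)`, because `Δ² = (tr M)² - 4 det M`. The initial vector decomposes as
`c (a - b) (1, 1) = (c - b) (a, c) + (a - c) (b, c)`, so the numerator and denominator of the closed form
are `c (a - b) α_t(0)` and `c (a - b) α_t(1)` (`fwd_zero_closed_form`). The factor
`c (a - b) = 2 c Δ` is positive and cancels in the ratio.
-/

open Finset
open scoped Classical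

noncomputable section

/-- Closed form of the forward vector on the all-zero sequence, up to the common factor `c (a - b)`.
The hypotheses say that `(a, c)` and `(b, c)` are eigenvectors of the one-step matrix with
eigenvalues `l1` and `l2`. -/
theorem fwd_zero_closed_form (q r e0 e1 : ℝ) (n : ℕ) (a b c l1 l2 : ℝ)
    (ha0 : (1-e0) * (a * (1-q) + c * q) = l1 * a)
    (ha1 : e1 * (a * r + c * (1-r)) = l1 * c)
    (hb0 : (1-e0) * (b * (1-q) + c * q) = l2 * b)
    (hb1 : e1 * (b * r + c * (1-r)) = l2 * c) (t : ℕ) (ht : t ≤ n) :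
    c*(a-b) * fwd q r e0 e1 n (fun _ => false) t false = a*(c-b)*l1^t + b*(a-c)*l2^t ∧
    c*(a-b) * fwd q r e0 e1 n (fun _ => false) t true = c*(c-b)*l1^t + c*(a-c)*l2^t := by
  induction t with
  | zero => simp only [fwd, pow_zero]; constructor <;> ring
  | succ t ih =>
    obtain ⟨h0, h1⟩ := ih (by omega)
    have htn : t < n := by omega
    simp only [fwd, htn, dite_true, mcE, mcT, pow_succ]
    constructor
    · linear_combination (1-e0)*(1-q)*h0 + (1-e0)*q*h1 + (c-b)*l1^t*ha0 + (a-c)*l2^t*hb0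
    · linear_combination e1*r*h0 + e1*(1-r)*h1 + (c-b)*l1^t*ha1 + (a-c)*l2^t*hb1

/-- Closed form for the forward ratio on the all-zero sequence. -/
theorem stmt7 (q r e0 e1 : ℝ)
    (hq0 : 0 < q) (hq1 : q < 1/2) (hr0 : 0 < r) (hr1 : r < 1/2)
    (he00 : 0 < e0) (he01 : e0 < 1/2) (he10 : 0 < e1) (he11 : e1 < 1/2)
    (n : ℕ) (hn : 1 ≤ n) (t : ℕ) (ht : t ≤ n)
    (Δ a b c l1 l2 : ℝ)
    (hΔ : Δ = Real.sqrt ((1-q)^2*(1-e0)^2 - 2*(1-q-r-q*r)*(1-e0)*e1 + (1-r)^2*e1^2))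
    (ha : a = (1-q)*(1-e0) - (1-r)*e1 + Δ)
    (hb : b = (1-q)*(1-e0) - (1-r)*e1 - Δ)
    (hc : c = 2*r*e1)
    (hl1 : l1 = ((1-q)*(1-e0) + (1-r)*e1 + Δ)/2)
    (hl2 : l2 = ((1-q)*(1-e0) + (1-r)*e1 - Δ)/2) :
    fwd q r e0 e1 n (fun _ => false) t false / fwd q r e0 e1 n (fun _ => false) t true
      = (a*(c-b)*l1^t + b*(a-c)*l2^t) / (c*(c-b)*l1^t + c*(a-c)*l2^t) := by
  have he0 : 0 < 1 - e0 := by linarith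
  -- The radicand is the discriminant of the one-step matrix, a square plus a positive term.
  have hpos : 0 < (1-q)^2*(1-e0)^2 - 2*(1-q-r-q*r)*(1-e0)*e1 + (1-r)^2*e1^2 := by
    have h1 : 0 < 4*(q*r*(1-e0)*e1) := by positivity
    nlinarith [sq_nonneg ((1-q)*(1-e0) - (1-r)*e1)]
  have hΔpos : 0 < Δ := hΔ ▸ Real.sqrt_pos.mpr hpos
  have hsq : Δ^2 = (1-q)^2*(1-e0)^2 - 2*(1-q-r-q*r)*(1-e0)*e1 + (1-r)^2*e1^2 := by
    rw [hΔ, Real.sq_sqrt hpos.le]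
  have hK : c*(a-b) ≠ 0 := by
    have : c*(a-b) = 4*r*e1*Δ := by rw [ha, hb, hc]; ring
    rw [this]; positivity
  obtain ⟨h0, h1⟩ := fwd_zero_closed_form q r e0 e1 n a b c l1 l2
    (by rw [ha, hc, hl1]; linear_combination (-1/2)*hsq)
    (by rw [ha, hc, hl1]; ring)
    (by rw [hb, hc, hl2]; linear_combination (-1/2)*hsq)
    (by rw [hb, hc, hl2]; ring) t ht
  rw [← h0, ← h1, mul_div_mul_left _ _ hK]

end
end

section
/- Let 0^n denote the all-zero sequence in {0,1}^n. For every t ∈ {0,…,n}, the backward ratio has the closed form β_t(0; 0^n)/β_t(1; 0^n) = (a(d−b)λ1^{n−t} + b(a−d)λ2^{n−t}) / (d(d−b)λ1^{n−t} + d(a−d)λ2^{n−t}), where Δ = √((1−q)²(1−ρ0)² − 2(1−q−r−q·r)(1−ρ0)ρ1 + (1−r)²ρ1²), a = (1−q)(1−ρ0) − (1−r)ρ1 + Δ, b = (1−q)(1−ρ0) − (1−r)ρ1 − Δ, d = 2r(1−ρ0), λ1 = ((1−q)(1−ρ0) + (1−r)ρ1 + Δ)/2, and λ2 = ((1−q)(1−ρ0)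 + (1−r)ρ1 − Δ)/2. -/
/-!
On the all-zero sequence the backward recursion is multiplication by the fixed matrix
`M = [[(1-q)(1-e0), q e1], [r(1-e0), (1-r) e1]]`. Its eigenvalues are `l1` and `l2`, with
eigenvectors `(a, d)` and `(b, d)`, and the terminal vector decomposes as
`d (a - b) • (1, 1) = (d - b) • (a, d) + (a - d) • (b, d)`. Applying `M ^ (n - t)` gives
`d (a - b) β_t` in closed form (`bwd_zero_closed`). The factor `d (a - b) = 2 d Δ` is nonzero, since
the radicand of `Δ` equals `((1-q)(1-e0) - (1-r) e1)² + 4 q r (1-e0) e1 > 0`, so it cancels in the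
ratio.
-/

open Finset
open scoped Classical

noncomputable section

/-- The closed form of the backward vector `k` steps before the end, scaled by `d (a - b)`. The
hypotheses say that `(a, d)` and `(b, d)` are eigenvectors, for `l1` and `l2`, of the matrix of the
recursion on the all-zero sequence. -/
theorem bwd_zero_closed (q r e0 e1 a b d l1 l2 : ℝ)
    (ha0 : a * (1-e0) * (1-q) + d * e1 * q = l1 * a)
    (ha1 : a * (1-e0) * r + d * e1 * (1-r) = l1 * d)
    (hb0 : b * (1-e0) * (1-q) + d * e1 * q = l2 * b)
    (hb1 : b * (1-e0) * r + d * e1 * (1-r) = l2 * d)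
    (n k : ℕ) (hk : k ≤ n) :
    d*(a-b) * bwd q r e0 e1 n (fun _ => false) (n-k) false
        = a*(d-b)*l1^k + b*(a-d)*l2^k ∧
    d*(a-b) * bwd q r e0 e1 n (fun _ => false) (n-k) true
        = d*(d-b)*l1^k + d*(a-d)*l2^k := by
  induction k with
  | zero =>
    constructor <;> rw [bwd] <;>
      simp only [Nat.sub_zero, lt_irrefl, dite_false, pow_zero] <;> ring
  | succ k ih =>
    obtain ⟨h0, h1⟩ := ih (by omega)
    have hlt : n - (k+1) < n := by omega
    have hs : n - (k+1) + 1 = n - k := by omega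
    constructor <;> rw [bwd] <;> simp only [hlt, dite_true, hs, mcE, mcT, pow_succ]
    · linear_combination (1-e0)*(1-q)*h0 + e1*q*h1 + (d-b)*l1^k*ha0 + (a-d)*l2^k*hb0
    · linear_combination (1-e0)*r*h0 + e1*(1-r)*h1 + (d-b)*l1^k*ha1 + (a-d)*l2^k*hb1

/-- Closed form for the backward ratio on the all-zero sequence. -/
theorem stmt8 (q r e0 e1 : ℝ)
    (hq0 : 0 < q) (hq1 : q < 1/2) (hr0 : 0 < r) (hr1 : r < 1/2)
    (he00 : 0 < e0) (he01 : e0 < 1/2) (he10 : 0 < e1) (he11 : e1 < 1/2)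
    (n : ℕ) (hn : 1 ≤ n) (t : ℕ) (ht : t ≤ n)
    (Δ a b d l1 l2 : ℝ)
    (hΔ : Δ = Real.sqrt ((1-q)^2*(1-e0)^2 - 2*(1-q-r-q*r)*(1-e0)*e1 + (1-r)^2*e1^2))
    (ha : a = (1-q)*(1-e0) - (1-r)*e1 + Δ)
    (hb : b = (1-q)*(1-e0) - (1-r)*e1 - Δ)
    (hd : d = 2*r*(1-e0))
    (hl1 : l1 = ((1-q)*(1-e0) + (1-r)*e1 + Δ)/2)
    (hl2 : l2 = ((1-q)*(1-e0) + (1-r)*e1 - Δ)/2) :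
    bwd q r e0 e1 n (fun _ => false) t false / bwd q r e0 e1 n (fun _ => false) t true
      = (a*(d-b)*l1^(n-t) + b*(a-d)*l2^(n-t)) / (d*(d-b)*l1^(n-t) + d*(a-d)*l2^(n-t)) := by
  have hpos : 0 < q * r * (1-e0) * e1 :=
    mul_pos (mul_pos (mul_pos hq0 hr0) (by linarith)) he10
  have hrad : 0 < (1-q)^2*(1-e0)^2 - 2*(1-q-r-q*r)*(1-e0)*e1 + (1-r)^2*e1^2 := by
    nlinarith [sq_nonneg ((1-q)*(1-e0) - (1-r)*e1)]
  have hΔpos : 0 < Δ := hΔ ▸ Real.sqrt_pos.mpr hrad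
  have hΔsq : Δ^2 = (1-q)^2*(1-e0)^2 - 2*(1-q-r-q*r)*(1-e0)*e1 + (1-r)^2*e1^2 := by
    rw [hΔ, Real.sq_sqrt hrad.le]
  have hdpos : 0 < d := hd ▸ mul_pos (by linarith) (by linarith)
  have hc : d*(a-b) ≠ 0 := by
    refine (mul_pos hdpos ?_).ne'
    rw [ha, hb]
    linarith
  obtain ⟨h0, h1⟩ := bwd_zero_closed q r e0 e1 a b d l1 l2
    (by rw [ha, hd, hl1]; linear_combination (-1/2) * hΔsq)
    (by rw [ha, hd, hl1]; ring)
    (by rw [hb, hd, hl2]; linear_combination (-1/2) * hΔsq)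
    (by rw [hb, hd, hl2]; ring)
    n (n-t) (Nat.sub_le n t)
  rw [Nat.sub_sub_self ht] at h0 h1
  rw [← h0, ← h1, mul_div_mul_left _ _ hc]

end
end

section
/- Let i ∈ {1,…,n}, let K ⊆ {1,…,n}\{i}, let U = {1,…,n}\(K ∪ {i}), and define the Bayesian differential privacy loss BDPL(i, K) = max over x_i ∈ {0,1}, x_K ∈ {0,1}^K, z ∈ {0,1}^n of Pr[Z = z | X_i = x_i, X_K = x_K] / Pr[Z = z | X_i = 1−x_i, X_K = x_K]. Suppose j ∈ K is such that neither j−1 nor j+1 belongs to U ∪ {i} (i.e., j is not adjacent to any unknown tuple nor to i). Then BDPL(i, K\{j}) = BDPL(i, K). -/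
/-!
The identity holds pointwise: for fixed `v`, `xK` and `z`, the likelihood ratio defining
`BDPL i (K.erase j)` equals the one defining `BDPL i K`.

Conditionally on the values at the neighbours of `j`, the coordinate `X_j` (with its emission) is
independent of all the others. In the form used here: if two configurations `x, y` agree at the
neighbours of `j`, then swapping the values `x j` and `y j` preserves the product `w x * w y`, both
for `w = Pr[X = ·]` and for `w = Pr[X = ·, Z = z]` (`SwapAt`, `swapAt_priorX`, `swapAt_joint`).
Since the neighbours of `j` lie in `K`, this swap is a weight-preserving bijection between pairs of
configurations, showing that the total weights satisfy
`w(x_i = v, K \ j) * w(x_i = v', K) = w(x_i = v, K) * w(x_i = v', K \ j)`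
(`SwapAt.cross_mul`). The total weights being positive, the ratios agree.
-/

open Finset
open scoped Classical

noncomputable section

/-- Bayesian differential privacy loss of the adversary `A(i, K)`: the maximum over
`x_i ∈ {0,1}`, values `x_K` on `K`, and outputs `z` of
`Pr[Z = z | X_i = x_i, X_K = x_K] / Pr[Z = z | X_i = 1 - x_i, X_K = x_K]`. -/
def BDPL (q r e0 e1 : ℝ) (n : ℕ) (i : Fin n) (K : Finset (Fin n)) : ℝ :=
  ⨆ v : Bool, ⨆ xK : Fin n → Bool, ⨆ z : Fin n → Bool,
    condPr q r e0 e1 n (fun _ z' => z' = z)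
        (fun x _ => x i = v ∧ ∀ k ∈ K, x k = xK k) /
    condPr q r e0 e1 n (fun _ z' => z' = z)
        (fun x _ => x i = (!v) ∧ ∀ k ∈ K, x k = xK k)

/-- The swap property of a weight `w` at `j`: if `x` and `y` agree at the neighbours of `j`, then
exchanging their values at `j` leaves `w x * w y` unchanged. -/
def SwapAt {n : ℕ} (j : Fin n) (w : (Fin n → Bool) → ℝ) : Prop :=
  ∀ x y : Fin n → Bool,
    (∀ k : Fin n, (k.1 + 1 = j.1 ∨ j.1 + 1 = k.1) → x k = y k) →
    w x * w y = w (Function.update x j (y j)) * w (Function.update y j (x j))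

lemma SwapAt.mul {n : ℕ} {j : Fin n} {f g : (Fin n → Bool) → ℝ}
    (hf : SwapAt j f) (hg : SwapAt j g) : SwapAt j (fun x => f x * g x) := by
  intro x y h
  have h1 := hf x y h
  have h2 := hg x y h
  simp only
  rw [mul_mul_mul_comm, h1, h2, mul_mul_mul_comm]

lemma SwapAt.prod {n : ℕ} {j : Fin n} {ι : Type*} (s : Finset ι) {f : ι → (Fin n → Bool) → ℝ}
    (hf : ∀ t ∈ s, SwapAt j (f t)) : SwapAt j (fun x => ∏ t ∈ s, f t x) := by
  intro x y h
  simp only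
  rw [← Finset.prod_mul_distrib, ← Finset.prod_mul_distrib]
  exact Finset.prod_congr rfl fun t ht => hf t ht x y h

lemma swapAt_single {n : ℕ} (j k : Fin n) (g : Bool → ℝ) : SwapAt j (fun x => g (x k)) := by
  intro x y _
  by_cases hk : k = j
  · subst hk
    simp [mul_comm]
  · simp [Function.update_of_ne hk]

lemma swapAt_pair {n : ℕ} (j a b : Fin n) (hab : a.1 + 1 = b.1) (g : Bool → Bool → ℝ) :
    SwapAt j (fun x => g (x a) (x b)) := by
  intro x y h
  by_cases ha : a = j
  · subst ha
    have hb : b ≠ a := by rintro rfl; omega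
    simp [Function.update_of_ne hb, h b (Or.inr hab), mul_comm]
  · by_cases hb : b = j
    · subst hb
      simp [Function.update_of_ne ha, h a (Or.inl hab), mul_comm]
    · simp [Function.update_of_ne ha, Function.update_of_ne hb]

lemma swapAt_priorX (q r : ℝ) {n : ℕ} (j : Fin n) : SwapAt j (priorX q r n) := by
  unfold priorX
  refine SwapAt.mul ?_ (SwapAt.prod _ fun t _ => swapAt_pair j _ _ rfl (mcT q r))
  have h : 0 < n := j.pos
  simp only [h, dif_pos]
  exact swapAt_single j _ (mcInit q r)

lemma swapAt_joint (q r e0 e1 : ℝ) {n : ℕ} (j : Fin n) (z : Fin n → Bool) :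
    SwapAt j (fun x => priorX q r n x * ∏ t, mcE e0 e1 (x t) (z t)) :=
  (swapAt_priorX q r j).mul
    (SwapAt.prod _ fun t _ => swapAt_single j t (fun b => mcE e0 e1 b (z t)))

/-- Total `w`-weight of the configurations with value `v` at `i` that agree with `xK` on `K`. -/
def totalWeight {n : ℕ} (w : (Fin n → Bool) → ℝ) (i : Fin n) (K : Finset (Fin n))
    (v : Bool) (xK : Fin n → Bool) : ℝ :=
  ∑ x : Fin n → Bool with (x i = v ∧ ∀ k ∈ K, x k = xK k), w x

/-- Swapping the values at `j` maps pairs in which only the second configuration is constrained at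
`j` to pairs in which only the first one is. -/
lemma SwapAt.cross_mul {n : ℕ} {w : (Fin n → Bool) → ℝ} {i j : Fin n} {K : Finset (Fin n)}
    (hw : SwapAt j w) (hiK : i ∉ K) (hj : j ∈ K)
    (hadj : ∀ k : Fin n, (k.1 + 1 = j.1 ∨ j.1 + 1 = k.1) → k ∈ K)
    (v v' : Bool) (xK : Fin n → Bool) :
    totalWeight w i (K.erase j) v xK * totalWeight w i K v' xK =
      totalWeight w i K v xK * totalWeight w i (K.erase j) v' xK := by
  have hij : i ≠ j := fun h => hiK (h ▸ hj)
  unfold totalWeight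
  rw [Finset.sum_mul_sum, Finset.sum_mul_sum, ← Finset.sum_product', ← Finset.sum_product']
  refine Finset.sum_nbij'
    (fun p => (Function.update p.1 j (p.2 j), Function.update p.2 j (p.1 j)))
    (fun p => (Function.update p.1 j (p.2 j), Function.update p.2 j (p.1 j))) ?_ ?_ ?_ ?_ ?_
  · rintro ⟨x, y⟩ h
    simp only [Finset.mem_product, Finset.mem_filter, Finset.mem_univ, true_and,
      Finset.mem_erase, Function.update_apply] at h ⊢
    grind
  · rintro ⟨x, y⟩ h
    simp only [Finset.mem_product, Finset.mem_filter, Finset.mem_univ, true_and,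
      Finset.mem_erase, Function.update_apply] at h ⊢
    grind
  · rintro ⟨x, y⟩ _
    simp
  · rintro ⟨x, y⟩ _
    simp
  · rintro ⟨x, y⟩ h
    simp only [Finset.mem_product, Finset.mem_filter, Finset.mem_univ, true_and,
      Finset.mem_erase] at h
    refine hw x y fun k hk => ?_
    have hkj : k ≠ j := by rintro rfl; omega
    rw [h.1.2 k ⟨hkj, hadj k hk⟩, h.2.2 k (hadj k hk)]

lemma totalWeight_pos {n : ℕ} {w : (Fin n → Bool) → ℝ} (hw : ∀ x, 0 < w x) {i : Fin n}
    {K : Finset (Fin n)} (hiK : i ∉ K) (v : Bool) (xK : Fin n → Bool) :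
    0 < totalWeight w i K v xK := by
  refine Finset.sum_pos (fun x _ => hw x) ⟨Function.update xK i v, ?_⟩
  simp only [Finset.mem_filter, Finset.mem_univ, true_and, Function.update_self]
  intro k hk
  have hki : k ≠ i := by rintro rfl; exact hiK hk
  exact Function.update_of_ne hki _ _

lemma sum_prod_mcE (e0 e1 : ℝ) {n : ℕ} (x : Fin n → Bool) :
    ∑ z : Fin n → Bool, ∏ t, mcE e0 e1 (x t) (z t) = 1 := by
  have h := Finset.prod_univ_sum (fun _ : Fin n => (Finset.univ : Finset Bool))
    (fun t b => mcE e0 e1 (x t) b)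
  rw [Fintype.piFinset_univ] at h
  rw [← h]
  refine Finset.prod_eq_one fun t _ => ?_
  cases x t <;> simp [mcE]

lemma condPr_eq_totalWeight (q r e0 e1 : ℝ) (n : ℕ) (i : Fin n) (K : Finset (Fin n)) (v : Bool)
    (xK z : Fin n → Bool) :
    condPr q r e0 e1 n (fun _ z' => z' = z) (fun x _ => x i = v ∧ ∀ k ∈ K, x k = xK k) =
      totalWeight (fun x => priorX q r n x * ∏ t, mcE e0 e1 (x t) (z t)) i K v xK /
        totalWeight (priorX q r n) i K v xK := by
  unfold condPr eventPr totalWeight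
  congr 1
  · rw [Finset.sum_filter]
    refine Finset.sum_congr rfl fun x _ => ?_
    by_cases h : x i = v ∧ ∀ k ∈ K, x k = xK k
    · simp [eq_true h]
    · simp only [h, and_false, if_false, Finset.sum_const_zero]
  · rw [Finset.sum_filter]
    refine Finset.sum_congr rfl fun x _ => ?_
    by_cases h : x i = v ∧ ∀ k ∈ K, x k = xK k
    · simp only [eq_true h, if_true]
      rw [← Finset.mul_sum, sum_prod_mcE, mul_one]
    · simp only [h, if_false, Finset.sum_const_zero]

lemma priorX_pos {q r : ℝ} (hq0 : 0 < q) (hq1 : q < 1/2) (hr0 : 0 < r) (hr1 : r < 1/2)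
    {n : ℕ} (x : Fin n → Bool) : 0 < priorX q r n x := by
  unfold priorX
  refine mul_pos ?_ (Finset.prod_pos fun t _ => ?_)
  · split_ifs with h
    · cases x ⟨0, h⟩ <;> simp only [mcInit] <;> positivity
    · exact one_pos
  · generalize x _ = a
    generalize x _ = b
    cases a <;> cases b <;> simp only [mcT] <;> linarith

lemma prod_mcE_pos {e0 e1 : ℝ} (he00 : 0 < e0) (he01 : e0 < 1/2) (he10 : 0 < e1)
    (he11 : e1 < 1/2) {n : ℕ} (x z : Fin n → Bool) : 0 < ∏ t, mcE e0 e1 (x t) (z t) := by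
  refine Finset.prod_pos fun t _ => ?_
  cases x t <;> cases z t <;> simp only [mcE] <;> linarith

/-- Removing a known tuple `j` that is adjacent neither to an unknown tuple nor to `i`
does not change the Bayesian differential privacy loss. -/
theorem stmt17 (q r e0 e1 : ℝ)
    (hq0 : 0 < q) (hq1 : q < 1/2) (hr0 : 0 < r) (hr1 : r < 1/2)
    (he00 : 0 < e0) (he01 : e0 < 1/2) (he10 : 0 < e1) (he11 : e1 < 1/2)
    (n : ℕ) (hn : 1 ≤ n) (i : Fin n) (K : Finset (Fin n)) (hiK : i ∉ K)
    (j : Fin n) (hj : j ∈ K)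
    (hadj : ∀ k : Fin n, (k.1 + 1 = j.1 ∨ j.1 + 1 = k.1) → k ∈ K) :
    BDPL q r e0 e1 n i (K.erase j) = BDPL q r e0 e1 n i K := by
  unfold BDPL
  congr! 6 with v xK z
  simp only [condPr_eq_totalWeight]
  have hiK' : i ∉ K.erase j := fun h => hiK (Finset.mem_of_mem_erase h)
  have hprior : ∀ x : Fin n → Bool, 0 < priorX q r n x := priorX_pos hq0 hq1 hr0 hr1
  have hjoint : ∀ x : Fin n → Bool, 0 < priorX q r n x * ∏ t, mcE e0 e1 (x t) (z t) :=
    fun x => mul_pos (hprior x) (prod_mcE_pos he00 he01 he10 he11 x z)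
  have hW := (swapAt_joint q r e0 e1 j z).cross_mul hiK hj hadj v (!v) xK
  have hM := (swapAt_priorX q r j).cross_mul hiK hj hadj v (!v) xK
  rw [div_div_div_eq, div_div_div_eq, div_eq_div_iff]
  · linear_combination
      (totalWeight (priorX q r n) i (K.erase j) (!v) xK *
        totalWeight (priorX q r n) i K v xK) * hW -
      (totalWeight (fun x => priorX q r n x * ∏ t, mcE e0 e1 (x t) (z t)) i K v xK *
        totalWeight (fun x => priorX q r n x * ∏ t, mcE e0 e1 (x t) (z t)) i
          (K.erase j) (!v) xK) * hM
  · exact (mul_pos (totalWeight_pos hprior hiK' _ _) (totalWeight_pos hjoint hiK' _ _)).ne'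
  · exact (mul_pos (totalWeight_pos hprior hiK _ _) (totalWeight_pos hjoint hiK _ _)).ne'

end
end
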